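/- Bisection Lemma: Let K be a statistical ALC knowledge base and C, D arbitrary ALC concepts. If there exist models I₀ and I₁ of K with [D]^{I₀} > 0 and [D]^{I₁} > 0 such that r₀ = [C ⊓ D]^{I₀}/[D]^{I₀} < [C ⊓ D]^{I₁}/[D]^{I₁} = r₁, then there exists a model I of K with [D]^I > 0 such that [C ⊓ D]^I/[D]^I = (r₀ + r₁)/2. -/

import Mathlib

open scoped Classical

/-- ALC concepts over concept names and role names (both drawn from ℕ,
regarded as disjoint name spaces). -/
inductive Cpt : Type where
  | top : Cpt
  | atom : ℕ → Cpt
  | neg : Cpt → Cpt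
  | inter : Cpt → Cpt → Cpt
  | ex : ℕ → Cpt → Cpt
deriving DecidableEq

/-- A finite interpretation with domain drawn from the type `α`. -/
structure Interp (α : Type) where
  dom : Finset α
  dom_nonempty : dom.Nonempty
  conc : ℕ → Finset α
  conc_sub : ∀ a, conc a ⊆ dom
  role : ℕ → Finset (α × α)
  role_sub : ∀ r, role r ⊆ dom ×ˢ dom

/-- The extension `C^I` of a concept. -/
noncomputable def Interp.ext {α : Type} (I : Interp α) : Cpt → Finset α
  | .top => I.dom
  | .atom a => I.conc a
  | .neg c => I.dom \ I.ext c
  | .inter c d => I.ext c ∩ I.ext d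
  | .ex r c => I.dom.filter (fun d => ∃ e ∈ I.ext c, (d, e) ∈ I.role r)

/-- `[C]^I`, the cardinality of the extension of `C`. -/
noncomputable def cardC {α : Type} (I : Interp α) (c : Cpt) : ℕ := (I.ext c).card

/-- A probabilistic conditional `(C|D)[l,u]`. -/
structure Cond : Type where
  C : Cpt
  D : Cpt
  l : ℚ
  u : ℚ
deriving DecidableEq

/-- `I ⊨ (C|D)[l,u]` iff `[D]^I = 0` or `l ≤ [C ⊓ D]^I/[D]^I ≤ u`. -/
def satCond {α : Type} (I : Interp α) (κ : Cond) : Prop :=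
  cardC I κ.D = 0 ∨
    (κ.l ≤ (cardC I (.inter κ.C κ.D) : ℚ) / (cardC I κ.D : ℚ) ∧
     (cardC I (.inter κ.C κ.D) : ℚ) / (cardC I κ.D : ℚ) ≤ κ.u)

/-- Finite interpretations (with domain drawn from the countable set ℕ). -/
abbrev FInterp := Interp ℕ

/-- The models of a knowledge base (finite set of conditionals). -/
def Models (K : Finset Cond) : Set FInterp := {I | ∀ κ ∈ K, satCond I κ}

/-- l-entailment: every model of `K` satisfies the conditional. -/
def entailsL (K : Finset Cond) (κ : Cond) : Prop := ∀ I ∈ Models K, satCond I κ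

theorem Interp.ext_sub_dom {α : Type} (I : Interp α) (c : Cpt) : I.ext c ⊆ I.dom := by
  induction c with
  | top => simp [Interp.ext]
  | atom a => simpa [Interp.ext] using I.conc_sub a
  | neg c ih => simp [Interp.ext]
  | inter c d ihc ihd =>
    intro x hx
    simp only [Interp.ext, Finset.mem_inter] at hx
    exact ihc hx.1
  | ex r c ih => simp [Interp.ext]

/-- Disjoint union of two interpretations over ℕ: evens and odds. -/
noncomputable def Interp.sum (I J : FInterp) : FInterp where
  dom := I.dom.image (fun x => 2 * x) ∪ J.dom.image (fun x => 2 * x + 1)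
  dom_nonempty := (I.dom_nonempty.image _).inl
  conc a := (I.conc a).image (fun x => 2 * x) ∪ (J.conc a).image (fun x => 2 * x + 1)
  conc_sub a := Finset.union_subset_union (Finset.image_subset_image (I.conc_sub a))
    (Finset.image_subset_image (J.conc_sub a))
  role r := (I.role r).image (fun p => (2 * p.1, 2 * p.2)) ∪
    (J.role r).image (fun p => (2 * p.1 + 1, 2 * p.2 + 1))
  role_sub r := by
    intro p hp
    simp only [Finset.mem_union, Finset.mem_image, Finset.mem_product] at hp ⊢
    rcases hp with ⟨q, hq, rfl⟩ | ⟨q, hq, rfl⟩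
    · have := Finset.mem_product.1 (I.role_sub r hq)
      exact ⟨Or.inl ⟨_, this.1, rfl⟩, Or.inl ⟨_, this.2, rfl⟩⟩
    · have := Finset.mem_product.1 (J.role_sub r hq)
      exact ⟨Or.inr ⟨_, this.1, rfl⟩, Or.inr ⟨_, this.2, rfl⟩⟩

theorem Interp.mem_sum_ext (I J : FInterp) (c : Cpt) (n : ℕ) :
    n ∈ (I.sum J).ext c ↔ (∃ x ∈ I.ext c, 2 * x = n) ∨ (∃ x ∈ J.ext c, 2 * x + 1 = n) := by
  induction c generalizing n with
  | top => simp [Interp.ext, Interp.sum]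
  | atom a => simp [Interp.ext, Interp.sum]
  | neg c ih =>
    have hd : n ∈ (I.sum J).dom ↔
        (∃ x ∈ I.dom, 2 * x = n) ∨ (∃ x ∈ J.dom, 2 * x + 1 = n) := by
      simp [Interp.sum]
    simp only [Interp.ext, Finset.mem_sdiff, ih, hd]
    constructor
    · rintro ⟨⟨x, hx, rfl⟩ | ⟨x, hx, rfl⟩, h⟩
      · exact Or.inl ⟨x, ⟨hx, fun h' => h (Or.inl ⟨x, h', rfl⟩)⟩, rfl⟩
      · exact Or.inr ⟨x, ⟨hx, fun h' => h (Or.inr ⟨x, h', rfl⟩)⟩, rfl⟩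
    · rintro (⟨x, ⟨hx, hn⟩, rfl⟩ | ⟨x, ⟨hx, hn⟩, rfl⟩)
      · refine ⟨Or.inl ⟨x, hx, rfl⟩, ?_⟩
        rintro (⟨y, hy, e⟩ | ⟨y, hy, e⟩)
        · obtain rfl : y = x := by omega
          exact hn hy
        · omega
      · refine ⟨Or.inr ⟨x, hx, rfl⟩, ?_⟩
        rintro (⟨y, hy, e⟩ | ⟨y, hy, e⟩)
        · omega
        · obtain rfl : y = x := by omega
          exact hn hy
  | inter c d ihc ihd =>
    simp only [Interp.ext, Finset.mem_inter, ihc, ihd]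
    constructor
    · rintro ⟨⟨x, hx, rfl⟩ | ⟨x, hx, rfl⟩, ⟨y, hy, e⟩ | ⟨y, hy, e⟩⟩
      · obtain rfl : y = x := by omega
        exact Or.inl ⟨y, ⟨hx, hy⟩, rfl⟩
      · omega
      · omega
      · obtain rfl : y = x := by omega
        exact Or.inr ⟨y, ⟨hx, hy⟩, rfl⟩
    · rintro (⟨x, ⟨hx, hn⟩, rfl⟩ | ⟨x, ⟨hx, hn⟩, rfl⟩)
      · exact ⟨Or.inl ⟨x, hx, rfl⟩, Or.inl ⟨x, hn, rfl⟩⟩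
      · exact ⟨Or.inr ⟨x, hx, rfl⟩, Or.inr ⟨x, hn, rfl⟩⟩
  | ex r c ih =>
    have hd : n ∈ (I.sum J).dom ↔
        (∃ x ∈ I.dom, 2 * x = n) ∨ (∃ x ∈ J.dom, 2 * x + 1 = n) := by
      simp [Interp.sum]
    have hr : ∀ a b, (a, b) ∈ (I.sum J).role r ↔
        (∃ x y, (x, y) ∈ I.role r ∧ 2 * x = a ∧ 2 * y = b) ∨
        (∃ x y, (x, y) ∈ J.role r ∧ 2 * x + 1 = a ∧ 2 * y + 1 = b) := by
      intro a b
      simp [Interp.sum]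
    simp only [Interp.ext, Finset.mem_filter, ih, hd, hr]
    constructor
    · rintro ⟨-, e, ⟨z, hz, rfl⟩ | ⟨z, hz, rfl⟩,
        ⟨x, y, hxy, rfl, e2⟩ | ⟨x, y, hxy, rfl, e2⟩⟩
      · obtain rfl : y = z := by omega
        exact Or.inl ⟨x, ⟨(Finset.mem_product.1 (I.role_sub r hxy)).1, y, hz, hxy⟩, rfl⟩
      · omega
      · omega
      · obtain rfl : y = z := by omega
        exact Or.inr ⟨x, ⟨(Finset.mem_product.1 (J.role_sub r hxy)).1, y, hz, hxy⟩, rfl⟩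
    · rintro (⟨x, ⟨hx, y, hy, hxy⟩, rfl⟩ | ⟨x, ⟨hx, y, hy, hxy⟩, rfl⟩)
      · exact ⟨Or.inl ⟨x, hx, rfl⟩, 2 * y, Or.inl ⟨y, hy, rfl⟩, Or.inl ⟨x, y, hxy, rfl, rfl⟩⟩
      · exact ⟨Or.inr ⟨x, hx, rfl⟩, 2 * y + 1, Or.inr ⟨y, hy, rfl⟩,
          Or.inr ⟨x, y, hxy, rfl, rfl⟩⟩

theorem cardC_sum (I J : FInterp) (c : Cpt) :
    cardC (I.sum J) c = cardC I c + cardC J c := by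
  have h : (I.sum J).ext c =
      (I.ext c).image (fun x => 2 * x) ∪ (J.ext c).image (fun x => 2 * x + 1) := by
    ext n
    simp [Interp.mem_sum_ext]
  unfold cardC
  rw [h, Finset.card_union_of_disjoint, Finset.card_image_of_injective,
    Finset.card_image_of_injective]
  · intro a b hab
    simpa using hab
  · intro a b hab
    simpa using hab
  · rw [Finset.disjoint_left]
    intro a ha hb
    simp only [Finset.mem_image] at ha hb
    obtain ⟨x, -, rfl⟩ := ha
    obtain ⟨y, -, e⟩ := hb
    omega

theorem exists_copies (I : FInterp) (n : ℕ) :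
    ∃ J : FInterp, ∀ c, cardC J c = (n + 1) * cardC I c := by
  induction n with
  | zero => exact ⟨I, fun c => by simp⟩
  | succ n ih =>
    obtain ⟨J, hJ⟩ := ih
    exact ⟨J.sum I, fun c => by rw [cardC_sum, hJ]; ring⟩

theorem satCond_iff (I : FInterp) (κ : Cond) :
    satCond I κ ↔ κ.l * cardC I κ.D ≤ cardC I (.inter κ.C κ.D) ∧
      (cardC I (.inter κ.C κ.D) : ℚ) ≤ κ.u * cardC I κ.D := by
  unfold satCond
  rcases Nat.eq_zero_or_pos (cardC I κ.D) with h | h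
  · have h' : cardC I (.inter κ.C κ.D) = 0 := by
      unfold cardC at *
      rw [Finset.card_eq_zero] at h
      simp [Interp.ext, h]
    simp [h, h']
  · have hq : (0 : ℚ) < cardC I κ.D := by exact_mod_cast h
    rw [le_div_iff₀ hq, div_le_iff₀ hq]
    simp [h.ne']

/-- Bisection Lemma. -/
theorem bisection (K : Finset Cond) (C D : Cpt) (I0 I1 : FInterp)
    (h0 : I0 ∈ Models K) (h1 : I1 ∈ Models K)
    (d0 : 0 < cardC I0 D) (d1 : 0 < cardC I1 D)
    (hlt : (cardC I0 (.inter C D) : ℚ) / (cardC I0 D : ℚ) <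
           (cardC I1 (.inter C D) : ℚ) / (cardC I1 D : ℚ)) :
    ∃ I ∈ Models K, 0 < cardC I D ∧
      (cardC I (.inter C D) : ℚ) / (cardC I D : ℚ) =
        ((cardC I0 (.inter C D) : ℚ) / (cardC I0 D : ℚ) +
         (cardC I1 (.inter C D) : ℚ) / (cardC I1 D : ℚ)) / 2 := by
  obtain ⟨m0, hm0⟩ := Nat.exists_eq_succ_of_ne_zero d0.ne'
  obtain ⟨m1, hm1⟩ := Nat.exists_eq_succ_of_ne_zero d1.ne'
  obtain ⟨J0, hJ0⟩ := exists_copies I0 m1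
  obtain ⟨J1, hJ1⟩ := exists_copies I1 m0
  have key : ∀ c, cardC (J0.sum J1) c = cardC I1 D * cardC I0 c + cardC I0 D * cardC I1 c := by
    intro c
    rw [cardC_sum, hJ0, hJ1, hm0, hm1]
  have q0 : (0 : ℚ) < cardC I0 D := by exact_mod_cast d0
  have q1 : (0 : ℚ) < cardC I1 D := by exact_mod_cast d1
  refine ⟨J0.sum J1, ?_, ?_, ?_⟩
  · intro κ hκ
    obtain ⟨a0, b0⟩ := (satCond_iff I0 κ).1 (h0 κ hκ)
    obtain ⟨a1, b1⟩ := (satCond_iff I1 κ).1 (h1 κ hκ)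
    rw [satCond_iff, key, key]
    push_cast
    have e1 := mul_le_mul_of_nonneg_left a0 q1.le
    have e2 := mul_le_mul_of_nonneg_left a1 q0.le
    have e3 := mul_le_mul_of_nonneg_left b0 q1.le
    have e4 := mul_le_mul_of_nonneg_left b1 q0.le
    constructor <;> linarith
  · rw [key]
    positivity
  · rw [key, key]
    push_cast
    field_simp
    ring
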